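/- Let μ be the Gauss measure on the irrationals of (0,1) and let a_1, a_2, … be the partial quotient functions of the regular continued fraction expansion. Let 𝒜_k = σ(a_1,…,a_k) and ℬ_j = σ(a_{j+1}, a_{j+2}, …). Then there exists θ ∈ (0,1) such that |μ(A ∩ B) − μ(A)μ(B)| ≤ θ^n μ(A)μ(B) for every k ≥ 1, n ≥ 1, every A ∈ 𝒜_k, and every B ∈ ℬ_{k+n} (Philipp's ψ-mixing estimate). -/

import Mathlib

open Filter MeasureTheory Topology
open scoped Classical

/-- The Gauss map `T x = 1/x mod 1`. -/
noncomputable def gaussMap (x : ℝ) : ℝ := Int.fract x⁻¹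

/-- `cfa n x` is the partial quotient `a_{n+1}(x)` of the regular continued fraction expansion
of `x`, generated by the Gauss map: `a_1(x) = ⌊1/x⌋` and `a_{k+1}(x) = a_k (T x)`. -/
noncomputable def cfa : ℕ → ℝ → ℕ
  | 0, x => ⌊x⁻¹⌋₊
  | n + 1, x => cfa n (gaussMap x)

/-- The Gauss measure `μ(A) = (1/log 2) ∫_A dx/(1+x)` on `(0,1)`. -/
noncomputable def gaussMeasure : Measure ℝ :=
  (volume.restrict (Set.Ioo (0 : ℝ) 1)).withDensity
    fun x => ENNReal.ofReal ((Real.log 2)⁻¹ * (1 + x)⁻¹)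

/-- The σ-algebra `σ(a_1, …, a_k)` generated by the first `k` partial quotients. -/
noncomputable def cfSigmaUpTo (k : ℕ) : MeasurableSpace ℝ :=
  ⨆ i ∈ Finset.range k, MeasurableSpace.comap (cfa i) ⊤

/-- The σ-algebra `σ(a_{j+1}, a_{j+2}, …)` generated by the partial quotients past index `j`. -/
noncomputable def cfSigmaFrom (j : ℕ) : MeasurableSpace ℝ :=
  ⨆ i ∈ {i : ℕ | j ≤ i}, MeasurableSpace.comap (cfa i) ⊤


namespace PM

/-- inverse branches of the Gauss map -/
noncomputable def v (i : ℕ) (y : ℝ) : ℝ := ((i : ℝ) + 1 + y)⁻¹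

lemma v_pos (i : ℕ) {y : ℝ} (hy : 0 ≤ y) : 0 < v i y := by unfold v; positivity

lemma v_mem (i : ℕ) {y : ℝ} (hy : 0 ≤ y) : v i y ∈ Set.Icc (0 : ℝ) 1 := by
  refine ⟨(v_pos i hy).le, ?_⟩
  unfold v
  apply inv_le_one_of_one_le₀
  have : (0 : ℝ) ≤ i := by positivity
  linarith

lemma v_mem' (i : ℕ) {y : ℝ} (hy : 0 < y) : v i y ∈ Set.Ioo (0 : ℝ) 1 := by
  refine ⟨(v_pos i hy.le), ?_⟩
  unfold v
  apply inv_lt_one_of_one_lt₀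
  have : (0 : ℝ) ≤ i := by positivity
  linarith

lemma gaussMap_v (i : ℕ) {y : ℝ} (hy : y ∈ Set.Ioo (0 : ℝ) 1) : gaussMap (v i y) = y := by
  unfold gaussMap v
  rw [inv_inv]
  have : (i : ℝ) + 1 + y = ((i + 1 : ℕ) : ℝ) + y := by push_cast; ring
  rw [this, Int.fract_natCast_add]
  exact Int.fract_eq_self.2 ⟨hy.1.le, hy.2⟩

lemma cfa_zero_v (i : ℕ) {y : ℝ} (hy : y ∈ Set.Ioo (0 : ℝ) 1) : cfa 0 (v i y) = i + 1 := by
  unfold cfa v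
  rw [inv_inv, Nat.floor_eq_iff (by have := hy.1; positivity)]
  have := hy.1
  have := hy.2
  push_cast
  constructor <;> linarith

lemma measurable_v (i : ℕ) : Measurable (v i) := by unfold v; fun_prop

lemma measurable_gaussMap : Measurable gaussMap :=
  measurable_fract.comp measurable_inv

lemma measurable_cfa (n : ℕ) : Measurable (cfa n) := by
  induction n with
  | zero => exact Nat.measurable_floor.comp measurable_inv
  | succ n ih => exact ih.comp measurable_gaussMap

lemma cfa_add (n m : ℕ) (x : ℝ) : cfa (n + m) x = cfa n (gaussMap^[m] x) := by
  induction m generalizing x with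
  | zero => rfl
  | succ m ih => rw [Function.iterate_succ_apply, ← ih]; rfl

/-- change of variables -/
lemma cov (F : ℝ → ENNReal) :
    ∫⁻ x in Set.Ioo (0 : ℝ) 1, F x =
      ∑' i : ℕ, ∫⁻ y in Set.Ioo (0 : ℝ) 1, ENNReal.ofReal (v i y ^ 2) * F (v i y) := by
  have hU : (⋃ i : ℕ, v i '' Set.Ico (0 : ℝ) 1) = Set.Ioc (0 : ℝ) 1 := by
    ext x
    simp only [Set.mem_iUnion, Set.mem_image]
    constructor
    · rintro ⟨i, y, hy, rfl⟩
      exact ⟨v_pos i hy.1, (v_mem i hy.1).2⟩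
    · rintro ⟨h0, h1⟩
      have h2 : 1 ≤ x⁻¹ := (one_le_inv₀ h0).2 h1
      have h3 : 1 ≤ ⌊x⁻¹⌋₊ := Nat.one_le_floor_iff _ |>.2 h2
      obtain ⟨i, hi⟩ := Nat.exists_eq_add_of_le' h3
      have h4 : (⌊x⁻¹⌋₊ : ℝ) = i + 1 := by rw [hi]; push_cast; rfl
      have h5 := Nat.floor_le (show 0 ≤ x⁻¹ by positivity)
      have h6 := Nat.lt_floor_add_one x⁻¹
      rw [h4] at h5 h6
      refine ⟨i, x⁻¹ - (i + 1), ⟨by linarith, by linarith⟩, ?_⟩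
      unfold v
      rw [add_sub_cancel, inv_inv]
  have hinj : ∀ i : ℕ, Set.InjOn (v i) (Set.Ico (0 : ℝ) 1) := by
    intro i x _ y _ h
    unfold v at h
    have := inv_injective h
    linarith
  have hmeas : ∀ i : ℕ, MeasurableSet (v i '' Set.Ico (0 : ℝ) 1) := fun i =>
    measurableSet_Ico.image_of_measurable_injOn (measurable_v i) (hinj i)
  have hdisj : Pairwise (Function.onFun Disjoint fun i : ℕ => v i '' Set.Ico (0 : ℝ) 1) := by
    intro i j hij
    rw [Function.onFun, Set.disjoint_left]
    rintro _ ⟨y, hy, rfl⟩ ⟨z, hz, h⟩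
    unfold v at h
    have h := inv_injective h
    apply hij
    have h1 : (i : ℝ) < j + 1 := by linarith [hy.1, hy.2, hz.1, hz.2]
    have h2 : (j : ℝ) < i + 1 := by linarith [hy.1, hy.2, hz.1, hz.2]
    norm_cast at h1 h2
    omega
  rw [setLIntegral_congr (Ioo_ae_eq_Ioc (μ := volume)), ← hU, lintegral_iUnion hmeas hdisj]
  congr 1
  ext i
  rw [lintegral_image_eq_lintegral_abs_deriv_mul (f' := fun y => -(v i y ^ 2)) measurableSet_Ico ?_ (hinj i),
    setLIntegral_congr (Ioo_ae_eq_Ico (μ := volume)).symm]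
  · simp
  · intro y hy
    have h1 : HasDerivAt (fun y : ℝ => (i : ℝ) + 1 + y) 1 y := (hasDerivAt_id y).const_add _
    have h0 : (i : ℝ) + 1 + y ≠ 0 := by have := hy.1; positivity
    refine (((h1.fun_inv h0).congr_deriv ?_).hasDerivWithinAt (s := Set.Ico 0 1))
    unfold v
    rw [inv_pow]; ring

/-- weights -/
noncomputable def p (i : ℕ) (x : ℝ) : ℝ := (1 + x) / (((i : ℝ) + 1 + x) * ((i : ℝ) + 2 + x))

/-- tails -/
noncomputable def t (i : ℕ) (x : ℝ) : ℝ := (1 + x) / ((i : ℝ) + 1 + x)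

lemma p_nonneg (i : ℕ) {x : ℝ} (hx : 0 ≤ x) : 0 ≤ p i x := by unfold p; positivity

lemma p_eq (i : ℕ) {x : ℝ} (hx : 0 ≤ x) : p i x = t i x - t (i + 1) x := by
  unfold p t
  push_cast
  field_simp
  ring

lemma v_sub (i : ℕ) {x : ℝ} (hx : 0 ≤ x) : v i x - v (i + 1) x = p i x / (1 + x) := by
  unfold p v
  push_cast
  field_simp
  ring

lemma v_sub' (i : ℕ) {x y : ℝ} (hx : 0 ≤ x) (hy : 0 ≤ y) :
    v i x - v i y = (y - x) * (v i x * v i y) := by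
  unfold v
  field_simp
  ring

lemma t_zero {x : ℝ} (hx : 0 ≤ x) : t 0 x = 1 := by
  unfold t
  have : (1 : ℝ) + x ≠ 0 := by positivity
  rw [Nat.cast_zero, zero_add]
  exact div_self this

lemma t_tendsto (x : ℝ) : Tendsto (fun i => t i x) atTop (𝓝 0) := by
  unfold t
  apply Tendsto.div_atTop tendsto_const_nhds
  apply tendsto_atTop_add_const_right
  exact tendsto_atTop_add_const_right _ _ tendsto_natCast_atTop_atTop

lemma hasSum_p {x : ℝ} (hx : 0 ≤ x) : HasSum (fun i => p i x) 1 := by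
  rw [hasSum_iff_tendsto_nat_of_nonneg (fun i => p_nonneg i hx)]
  have : ∀ n, ∑ i ∈ Finset.range n, p i x = 1 - t n x := by
    intro n
    rw [Finset.sum_congr rfl (fun i _ => p_eq i hx), Finset.sum_range_sub', t_zero hx]
  simp_rw [this]
  simpa using (t_tendsto x).const_sub 1

/-- admissible densities -/
def Adm (h : ℝ → ℝ) (L : ℝ) : Prop :=
  (∀ x ∈ Set.Icc (0 : ℝ) 1, 0 ≤ h x) ∧
    ∀ x ∈ Set.Icc (0 : ℝ) 1, ∀ y ∈ Set.Icc (0 : ℝ) 1, |h x - h y| ≤ L * |x - y|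

/-- transfer operator -/
noncomputable def P (h : ℝ → ℝ) (x : ℝ) : ℝ := ∑' i : ℕ, p i x * h (v i x)

lemma Adm.L_nonneg {h : ℝ → ℝ} {L : ℝ} (H : Adm h L) : 0 ≤ L := by
  have := H.2 0 (by simp) 1 (by simp)
  simp at this
  exact (abs_nonneg _).trans this

lemma Adm.bdd {h : ℝ → ℝ} {L : ℝ} (H : Adm h L) {x : ℝ} (hx : x ∈ Set.Icc (0 : ℝ) 1) :
    h x ≤ h 0 + L := by
  have h1 := H.2 x hx 0 (by simp)
  have h2 := (le_abs_self _).trans h1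
  rw [sub_zero, abs_of_nonneg hx.1] at h2
  nlinarith [H.L_nonneg, hx.1, hx.2]

lemma Adm.summable {h : ℝ → ℝ} {L : ℝ} (H : Adm h L) {x y : ℝ} (hx : 0 ≤ x) (hy : 0 ≤ y) :
    Summable (fun i => p i x * h (v i y)) := by
  refine Summable.of_nonneg_of_le (fun i => mul_nonneg (p_nonneg i hx) (H.1 _ (v_mem i hy)))
    (fun i => ?_) ((hasSum_p hx).summable.mul_right (h 0 + L))
  exact mul_le_mul_of_nonneg_left (H.bdd (v_mem i hy)) (p_nonneg i hx)

lemma t_sub (i : ℕ) {x y : ℝ} (hx : 0 ≤ x) (hy : 0 ≤ y) : |t i x - t i y| ≤ 1 / 4 * |x - y| := by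
  have : t i x - t i y = (i / (((i : ℝ) + 1 + x) * (i + 1 + y))) * (x - y) := by
    unfold t
    field_simp
    ring
  rw [this, abs_mul]
  apply mul_le_mul_of_nonneg_right _ (abs_nonneg _)
  rw [abs_of_nonneg (by positivity), div_le_div_iff₀ (by positivity) (by norm_num)]
  have hi : (0 : ℝ) ≤ i := by positivity
  nlinarith [sq_nonneg ((i : ℝ) - 1), mul_nonneg hi hx, mul_nonneg hi hy, mul_nonneg hx hy]

lemma P_first {h : ℝ → ℝ} {L : ℝ} (H : Adm h L) {x y : ℝ} (hx : x ∈ Set.Icc (0 : ℝ) 1)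
    (hy : y ∈ Set.Icc (0 : ℝ) 1) :
    |∑' i : ℕ, (p i x - p i y) * h (v i x)| ≤ 1 / 4 * L * |x - y| := by
  set d : ℕ → ℝ := fun i => t i x - t i y with hd
  have hL := H.L_nonneg
  have hdd : ∀ i, |d (i + 1) * (h (v (i + 1) x) - h (v i x))| ≤
      1 / 4 * L * |x - y| * p i x := by
    intro i
    rw [abs_mul]
    have h1 := t_sub (i + 1) hx.1 hy.1
    have h2 := H.2 _ (v_mem (i + 1) hx.1) _ (v_mem i hx.1)
    rw [abs_sub_comm (v (i + 1) x), v_sub i hx.1, abs_of_nonneg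
      (div_nonneg (p_nonneg i hx.1) (by linarith [hx.1]))] at h2
    have h3 : p i x / (1 + x) ≤ p i x := div_le_self (p_nonneg i hx.1) (by linarith [hx.1])
    calc _ ≤ (1 / 4 * |x - y|) * (L * p i x) :=
          mul_le_mul h1 (h2.trans (mul_le_mul_of_nonneg_left h3 hL)) (abs_nonneg _) (by positivity)
      _ = _ := by ring
  have hs : HasSum (fun i => 1 / 4 * L * |x - y| * p i x) (1 / 4 * L * |x - y|) := by
    simpa using (hasSum_p hx.1).mul_left (1 / 4 * L * |x - y|)
  have hs1 : Summable (fun i => d (i + 1) * (h (v (i + 1) x) - h (v i x))) :=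
    Summable.of_norm_bounded hs.summable hdd
  have hs2 : Summable (fun i => (p i x - p i y) * h (v i x)) := by
    simp_rw [sub_mul]
    exact (H.summable hx.1 hx.1).sub (H.summable hy.1 hx.1)
  have key : ∑' i : ℕ, (p i x - p i y) * h (v i x) =
      ∑' i : ℕ, d (i + 1) * (h (v (i + 1) x) - h (v i x)) := by
    rw [← sub_eq_zero, ← hs2.tsum_sub hs1]
    have h1 := (hs2.sub hs1).hasSum.tendsto_sum_nat
    refine tendsto_nhds_unique h1 ?_
    have h2 : ∀ n, ∑ i ∈ Finset.range n, ((p i x - p i y) * h (v i x) -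
        d (i + 1) * (h (v (i + 1) x) - h (v i x))) = - (d n * h (v n x)) := by
      intro n
      have : ∀ i ∈ Finset.range n, ((p i x - p i y) * h (v i x) -
        d (i + 1) * (h (v (i + 1) x) - h (v i x))) = d i * h (v i x) -
          d (i + 1) * h (v (i + 1) x) := by
        intro i _
        rw [p_eq i hx.1, p_eq i hy.1, hd]
        ring
      rw [Finset.sum_congr rfl this, Finset.sum_range_sub' (fun i => d i * h (v i x))]
      simp [hd, t_zero hx.1, t_zero hy.1]
    simp_rw [h2]
    rw [← neg_zero]
    apply Tendsto.neg
    have hd0 : Tendsto d atTop (𝓝 0) := by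
      simpa using (t_tendsto x).sub (t_tendsto y)
    apply hd0.zero_mul_isBoundedUnder_le
    refine Filter.isBoundedUnder_of ⟨h 0 + L, fun n => ?_⟩
    simp only [Function.comp, Real.norm_eq_abs]
    rw [abs_of_nonneg (H.1 _ (v_mem n hx.1))]
    exact H.bdd (v_mem n hx.1)
  rw [key, ← Real.norm_eq_abs]
  exact tsum_of_norm_bounded hs hdd

lemma P_second {h : ℝ → ℝ} {L : ℝ} (H : Adm h L) {x y : ℝ} (hx : x ∈ Set.Icc (0 : ℝ) 1)
    (hy : y ∈ Set.Icc (0 : ℝ) 1) :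
    |∑' i : ℕ, p i y * (h (v i x) - h (v i y))| ≤ 5 / 8 * L * |x - y| := by
  have hL := H.L_nonneg
  have hv : ∀ i, |h (v i x) - h (v i y)| ≤ L * |x - y| * (v i x * v i y) := by
    intro i
    have := H.2 _ (v_mem i hx.1) _ (v_mem i hy.1)
    rw [v_sub' i hx.1 hy.1, abs_mul, abs_of_nonneg (mul_pos (v_pos i hx.1) (v_pos i hy.1)).le,
      abs_sub_comm y x, ← mul_assoc] at this
    exact this
  have hy0 := hy.1
  have hx0 := hx.1
  set w : ℕ → ℝ := fun i => p i y / 4 + if i = 0 then p 0 y * (1 / (1 + y) - 1 / 4) else 0 with hw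
  have hs : HasSum w (1 / 4 + p 0 y * (1 / (1 + y) - 1 / 4)) :=
    ((hasSum_p hy.1).div_const 4).add (hasSum_ite_eq 0 _)
  have hs' := hs.mul_left (L * |x - y|)
  have hb : ∀ i, ‖p i y * (h (v i x) - h (v i y))‖ ≤ L * |x - y| * w i := by
    intro i
    rw [norm_mul, Real.norm_eq_abs, Real.norm_eq_abs, abs_of_nonneg (p_nonneg i hy.1)]
    have h1 : p i y * (v i x * v i y) ≤ w i := by
      rcases Nat.eq_zero_or_pos i with rfl | hi
      · have : w 0 = p 0 y * (1 / (1 + y)) := by simp [hw]; ring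
        rw [this]
        apply mul_le_mul_of_nonneg_left _ (p_nonneg 0 hy.1)
        have h2 : v 0 y = 1 / (1 + y) := by simp [v]
        rw [← h2]
        have := (v_mem 0 hx.1).2
        nlinarith [v_pos 0 hy.1]
      · have : w i = p i y * (1 / 4) := by simp [hw, hi.ne']; ring
        rw [this]
        apply mul_le_mul_of_nonneg_left _ (p_nonneg i hy.1)
        have hi' : (1 : ℝ) ≤ i := by exact_mod_cast hi
        have h2 : ∀ z : ℝ, 0 ≤ z → v i z ≤ 1 / 2 := by
          intro z hz
          unfold v
          rw [one_div]
          apply inv_anti₀ (by norm_num)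
          linarith
        calc v i x * v i y ≤ 1 / 2 * (1 / 2) :=
              mul_le_mul (h2 _ hx.1) (h2 _ hy.1) (v_pos i hy.1).le (by norm_num)
          _ = 1 / 4 := by norm_num
    calc p i y * |h (v i x) - h (v i y)| ≤ p i y * (L * |x - y| * (v i x * v i y)) :=
          mul_le_mul_of_nonneg_left (hv i) (p_nonneg i hy.1)
      _ = L * |x - y| * (p i y * (v i x * v i y)) := by ring
      _ ≤ _ := mul_le_mul_of_nonneg_left h1 (by positivity)
  refine (tsum_of_norm_bounded hs' hb).trans ?_
  have h3 : 1 / 4 + p 0 y * (1 / (1 + y) - 1 / 4) ≤ 5 / 8 := by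
    have : p 0 y = (1 + y) / ((1 + y) * (2 + y)) := by simp [p]
    rw [this]
    have h5 : 1 / 4 + (1 + y) / ((1 + y) * (2 + y)) * (1 / (1 + y) - 1 / 4) =
      (4 + (1 + y) ^ 2) / (4 * ((1 + y) * (2 + y))) := by
      field_simp
      ring
    rw [h5, div_le_div_iff₀ (by positivity) (by norm_num)]
    nlinarith
  calc _ ≤ L * |x - y| * (5 / 8) := mul_le_mul_of_nonneg_left h3 (by positivity)
    _ = _ := by ring

lemma Adm.P {h : ℝ → ℝ} {L : ℝ} (H : Adm h L) : Adm (P h) (7 / 8 * L) := by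
  refine ⟨fun x hx => tsum_nonneg fun i =>
    mul_nonneg (p_nonneg i hx.1) (H.1 _ (v_mem i hx.1)), fun x hx y hy => ?_⟩
  have e : PM.P h x - PM.P h y = ∑' i : ℕ, (p i x - p i y) * h (v i x) +
      ∑' i : ℕ, p i y * (h (v i x) - h (v i y)) := by
    have a := H.summable hx.1 hx.1
    have b := H.summable hy.1 hx.1
    have c := H.summable hy.1 hy.1
    simp_rw [sub_mul, mul_sub]
    rw [a.tsum_sub b, b.tsum_sub c]
    unfold PM.P
    ring
  rw [e]
  refine (abs_add_le _ _).trans ?_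
  have := P_first H hx hy
  have := P_second H hx hy
  linarith

end PM

namespace PM

/-- the measure with density `h x / (1 + x)` on `(0,1)`, as a set function -/
noncomputable def J (h : ℝ → ℝ) (E : Set ℝ) : ENNReal :=
  ∫⁻ x in Set.Ioo (0 : ℝ) 1, E.indicator (fun x => ENNReal.ofReal (h x / (1 + x))) x

lemma gauss_eq {E : Set ℝ} (hE : MeasurableSet E) :
    gaussMeasure E = J (fun _ => (Real.log 2)⁻¹) E := by
  unfold gaussMeasure J
  rw [withDensity_apply _ hE, lintegral_indicator hE]
  simp only [div_eq_mul_inv]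

lemma J_congr {h g : ℝ → ℝ} (hg : ∀ x ∈ Set.Ioo (0 : ℝ) 1, h x = g x) (E : Set ℝ) :
    J h E = J g E := by
  unfold J
  refine setLIntegral_congr_fun measurableSet_Ioo fun x hx => ?_
  simp only [Set.indicator, hg x hx]

lemma J_congr_set (h : ℝ → ℝ) {E F : Set ℝ} (hE : ∀ x ∈ Set.Ioo (0 : ℝ) 1, x ∈ E ↔ x ∈ F) :
    J h E = J h F := by
  unfold J
  refine setLIntegral_congr_fun measurableSet_Ioo fun x hx => ?_
  simp only [Set.indicator, hE x hx]

lemma J_mono {h g : ℝ → ℝ} (hg : ∀ x ∈ Set.Ioo (0 : ℝ) 1, h x ≤ g x) (E : Set ℝ) :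
    J h E ≤ J g E := by
  unfold J
  refine setLIntegral_mono' measurableSet_Ioo fun x hx => ?_
  simp only [Set.indicator]
  split_ifs
  · have := hx.1
    have := hg x hx
    gcongr
  · exact le_rfl

lemma J_smul (c : ℝ) (hc : 0 ≤ c) (h : ℝ → ℝ) (E : Set ℝ) :
    J (fun x => c * h x) E = ENNReal.ofReal c * J h E := by
  unfold J
  rw [← lintegral_const_mul' _ _ ENNReal.ofReal_ne_top]
  congr 1
  ext x
  simp only [Set.indicator]
  split_ifs
  · rw [mul_div_assoc, ENNReal.ofReal_mul hc]
  · simp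

lemma log2_pos : 0 < Real.log 2 := Real.log_pos (by norm_num)

lemma J_const (c : ℝ) (hc : 0 ≤ c) {E : Set ℝ} (hE : MeasurableSet E) :
    J (fun _ => c) E = ENNReal.ofReal (c * Real.log 2) * gaussMeasure E := by
  rw [gauss_eq hE, ← J_smul _ (mul_nonneg hc log2_pos.le)]
  have := log2_pos.ne'
  refine J_congr (fun x _ => ?_) E
  field_simp

lemma Adm.contOn {h : ℝ → ℝ} {L : ℝ} (H : Adm h L) : ContinuousOn h (Set.Icc 0 1) := by
  have : LipschitzOnWith (Real.toNNReal L) h (Set.Icc 0 1) := by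
    apply LipschitzOnWith.of_dist_le_mul
    intro x hx y hy
    rw [Real.coe_toNNReal _ H.L_nonneg]
    exact H.2 x hx y hy
  exact this.continuousOn

lemma Adm.contOn' {h : ℝ → ℝ} {L : ℝ} (H : Adm h L) :
    ContinuousOn (fun x => h x / (1 + x)) (Set.Icc 0 1) := by
  apply H.contOn.div (by fun_prop)
  intro x hx
  have := hx.1
  positivity

lemma J_pre {h : ℝ → ℝ} {L : ℝ} (H : Adm h L) {E : Set ℝ} (hE : MeasurableSet E) :
    J h (gaussMap ⁻¹' E) = J (P h) E := by
  unfold J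
  rw [cov]
  have h1 : ∀ i : ℕ, ∫⁻ y in Set.Ioo (0 : ℝ) 1, ENNReal.ofReal (v i y ^ 2) *
      (gaussMap ⁻¹' E).indicator (fun x => ENNReal.ofReal (h x / (1 + x))) (v i y) =
      ∫⁻ y in Set.Ioo (0 : ℝ) 1, E.indicator
        (fun y => ENNReal.ofReal (p i y * h (v i y) / (1 + y))) y := by
    intro i
    refine setLIntegral_congr_fun measurableSet_Ioo fun y hy => ?_
    have hy0 := hy.1
    simp only [Set.indicator, Set.mem_preimage, gaussMap_v i hy]
    split_ifs
    · rw [← ENNReal.ofReal_mul (by positivity)]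
      congr 1
      unfold p v
      field_simp
      ring
    · simp
  simp_rw [h1]
  rw [← lintegral_tsum]
  · refine setLIntegral_congr_fun measurableSet_Ioo fun y hy => ?_
    have hy0 := hy.1
    simp only [Set.indicator]
    split_ifs
    · unfold P
      rw [← tsum_div_const, ENNReal.ofReal_tsum_of_nonneg]
      · intro i
        exact div_nonneg (mul_nonneg (p_nonneg i hy0.le) (H.1 _ (v_mem i hy0.le))) (by positivity)
      · exact (H.summable hy0.le hy0.le).div_const _
    · simp
  · intro i
    apply AEMeasurable.indicator _ hE
    apply ENNReal.measurable_ofReal.comp_aemeasurable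
    have hv : ContinuousOn (v i) (Set.Icc 0 1) := by
      unfold v
      apply ContinuousOn.inv₀ (by fun_prop)
      intro x hx
      have := hx.1
      positivity
    have hp : ContinuousOn (p i) (Set.Icc 0 1) := by
      unfold p
      apply ContinuousOn.div (by fun_prop) (by fun_prop)
      intro x hx
      have := hx.1
      positivity
    have : ContinuousOn (fun y => p i y * h (v i y) / (1 + y)) (Set.Icc 0 1) := by
      apply ContinuousOn.div (hp.mul (H.contOn.comp hv fun x hx => v_mem i hx.1)) (by fun_prop)
      intro x hx
      have := hx.1
      positivity
    exact (this.mono Set.Ioo_subset_Icc_self).aemeasurable measurableSet_Ioo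

lemma P_const (c : ℝ) {x : ℝ} (hx : 0 ≤ x) : P (fun _ => c) x = c := by
  unfold P
  rw [tsum_mul_right, (hasSum_p hx).tsum_eq, one_mul]

lemma adm_const {c : ℝ} (hc : 0 ≤ c) : Adm (fun _ => c) 0 := by
  refine ⟨fun _ _ => hc, fun x _ y _ => by simp⟩

lemma measurable_iter (n : ℕ) : Measurable (gaussMap^[n]) := measurable_gaussMap.iterate n

lemma gauss_inv {E : Set ℝ} (hE : MeasurableSet E) (n : ℕ) :
    gaussMeasure (gaussMap^[n] ⁻¹' E) = gaussMeasure E := by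
  induction n with
  | zero => rfl
  | succ n ih =>
    rw [Function.iterate_succ, Set.preimage_comp, ← ih,
      gauss_eq (measurable_gaussMap (measurable_iter n hE)), gauss_eq (measurable_iter n hE),
      J_pre (adm_const (inv_nonneg.2 log2_pos.le)) (measurable_iter n hE)]
    exact J_congr (fun x hx => P_const _ hx.1.le) _

/-- total mass -/
noncomputable def c (h : ℝ → ℝ) : ℝ := ∫ x in (0 : ℝ)..1, h x / (1 + x)

lemma Adm.intervalIntegrable {h : ℝ → ℝ} {L : ℝ} (H : Adm h L) :
    IntervalIntegrable (fun x => h x / (1 + x)) volume 0 1 := by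
  apply ContinuousOn.intervalIntegrable
  rw [Set.uIcc_of_le zero_le_one]
  exact H.contOn'

lemma J_univ {h : ℝ → ℝ} {L : ℝ} (H : Adm h L) : J h Set.univ = ENNReal.ofReal (c h) := by
  unfold J c
  simp only [Set.indicator_univ]
  rw [intervalIntegral.integral_of_le zero_le_one, ofReal_integral_eq_lintegral_ofReal,
    setLIntegral_congr (Ioo_ae_eq_Ioc (μ := volume))]
  · exact H.intervalIntegrable.1
  · refine (ae_restrict_iff' measurableSet_Ioc).2 (ae_of_all _ fun x hx => ?_)
    exact div_nonneg (H.1 x ⟨hx.1.le, hx.2⟩) (by linarith [hx.1])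

lemma c_nonneg {h : ℝ → ℝ} {L : ℝ} (H : Adm h L) : 0 ≤ c h := by
  unfold c
  apply intervalIntegral.integral_nonneg zero_le_one
  intro x hx
  exact div_nonneg (H.1 x hx) (by linarith [hx.1])

lemma c_P {h : ℝ → ℝ} {L : ℝ} (H : Adm h L) : c (P h) = c h := by
  have h1 := J_pre H MeasurableSet.univ
  rw [Set.preimage_univ, J_univ H, J_univ H.P,
    ENNReal.ofReal_eq_ofReal_iff (c_nonneg H) (c_nonneg H.P)] at h1
  exact h1.symm

lemma int_log : ∫ x in (0 : ℝ)..1, (1 : ℝ) / (1 + x) = Real.log 2 := by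
  have := intervalIntegral.integral_comp_add_left (a := 0) (b := 1) (fun x : ℝ => 1 / x) 1
  rw [this, integral_one_div]
  · norm_num
  · norm_num

lemma osc {h : ℝ → ℝ} {L : ℝ} (H : Adm h L) {x : ℝ} (hx : x ∈ Set.Icc (0 : ℝ) 1) :
    |h x * Real.log 2 - c h| ≤ L / 2 := by
  have hL := H.L_nonneg
  have i1 : IntervalIntegrable (fun y => h x * (1 / (1 + y))) volume 0 1 := by
    apply ContinuousOn.intervalIntegrable
    rw [Set.uIcc_of_le zero_le_one]
    apply ContinuousOn.mul (by fun_prop)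
    apply ContinuousOn.div (by fun_prop) (by fun_prop)
    intro y hy
    have := hy.1
    positivity
  have e : h x * Real.log 2 - c h =
      ∫ y in (0 : ℝ)..1, (h x * (1 / (1 + y)) - h y / (1 + y)) := by
    rw [intervalIntegral.integral_sub i1 H.intervalIntegrable, intervalIntegral.integral_const_mul,
      int_log]
    rfl
  have e2 : ∫ y in (0 : ℝ)..1, L * (x + (1 - 2 * x) * y) = L / 2 := by
    rw [intervalIntegral.integral_const_mul, intervalIntegral.integral_add (by simp)
      (by apply Continuous.intervalIntegrable; fun_prop),
      intervalIntegral.integral_const_mul, integral_id]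
    simp
    ring
  rw [e, ← e2, ← Real.norm_eq_abs]
  apply intervalIntegral.norm_integral_le_of_norm_le zero_le_one
  · refine ae_of_all _ fun y hy => ?_
    have hy' : y ∈ Set.Icc (0 : ℝ) 1 := ⟨hy.1.le, hy.2⟩
    have hy0 := hy.1
    have : h x * (1 / (1 + y)) - h y / (1 + y) = (h x - h y) / (1 + y) := by ring
    rw [this, norm_div, Real.norm_eq_abs, Real.norm_eq_abs, abs_of_pos (by positivity : 0 < 1 + y)]
    refine (div_le_self (abs_nonneg _) (by linarith)).trans ((H.2 x hx y hy').trans ?_)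
    apply mul_le_mul_of_nonneg_left _ hL
    rw [abs_le]
    constructor <;> nlinarith [hx.1, hx.2, hy.1, hy.2]
  · apply Continuous.intervalIntegrable; fun_prop

lemma decay (n : ℕ) : ∀ (h : ℝ → ℝ) (L : ℝ), Adm h L → ∀ B : Set ℝ, MeasurableSet B →
    J h (gaussMap^[n] ⁻¹' B) ≤ ENNReal.ofReal (c h + (7 / 8) ^ n * (L / 2)) * gaussMeasure B ∧
    ENNReal.ofReal (c h - (7 / 8) ^ n * (L / 2)) * gaussMeasure B ≤
      J h (gaussMap^[n] ⁻¹' B) := by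
  have hl := log2_pos
  induction n with
  | zero =>
    intro h L H B hB
    have hL := H.L_nonneg
    have hc := c_nonneg H
    simp only [Function.iterate_zero, Set.preimage_id_eq, id_eq, pow_zero, one_mul]
    constructor
    · have := J_const ((c h + L / 2) / Real.log 2) (by positivity) hB
      rw [div_mul_cancel₀ _ hl.ne'] at this
      rw [← this]
      refine J_mono (fun x hx => ?_) B
      rw [le_div_iff₀ hl]
      have := abs_le.1 (osc H ⟨hx.1.le, hx.2.le⟩)
      linarith
    · rcases le_total (c h - L / 2) 0 with hn | hn
      · rw [ENNReal.ofReal_of_nonpos hn]; simp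
      · have := J_const ((c h - L / 2) / Real.log 2) (by positivity) hB
        rw [div_mul_cancel₀ _ hl.ne'] at this
        rw [← this]
        refine J_mono (fun x hx => ?_) B
        rw [div_le_iff₀ hl]
        have := abs_le.1 (osc H ⟨hx.1.le, hx.2.le⟩)
        linarith
  | succ n ih =>
    intro h L H B hB
    have := ih (P h) _ H.P B hB
    rw [Function.iterate_succ, Set.preimage_comp, J_pre H (measurable_iter n hB)]
    rw [c_P H] at this
    have e : (7 / 8 : ℝ) ^ (n + 1) * (L / 2) = (7 / 8) ^ n * (7 / 8 * L / 2) := by ring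
    rw [e]
    exact this

/-- the two-parameter family of densities -/
noncomputable def hh (s u x : ℝ) : ℝ := (1 + x) / ((1 + s * x) * (1 + u * x))

lemma adm_hh {s u : ℝ} (hs : s ∈ Set.Icc (0 : ℝ) 1) (hu : u ∈ Set.Icc (0 : ℝ) 1) :
    Adm (hh s u) 1 := by
  obtain ⟨hs0, hs1⟩ := hs
  obtain ⟨hu0, hu1⟩ := hu
  constructor
  · rintro x ⟨hx0, hx1⟩
    unfold hh
    positivity
  · rintro x ⟨hx0, hx1⟩ y ⟨hy0, hy1⟩
    have e : hh s u x - hh s u y = ((1 - (s + u) - s * u * (x + y) - s * u * (x * y)) /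
        (((1 + s * x) * (1 + u * x)) * ((1 + s * y) * (1 + u * y)))) * (x - y) := by
      unfold hh
      field_simp
      ring
    rw [e, abs_mul]
    apply mul_le_mul_of_nonneg_right _ (abs_nonneg _)
    rw [abs_div, abs_of_pos (by positivity :
      0 < ((1 + s * x) * (1 + u * x)) * ((1 + s * y) * (1 + u * y))),
      div_le_one (by positivity)]
    have k1 : 1 + (s + u) * x + s * u * (x * x) = (1 + s * x) * (1 + u * x) := by ring
    have hsu : 0 ≤ s * u := by positivity
    have D : 1 + (s + u) * (x + y) + (s + u) ^ 2 * (x * y) ≤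
        ((1 + s * x) * (1 + u * x)) * ((1 + s * y) * (1 + u * y)) := by
      have : ((1 + s * x) * (1 + u * x)) * ((1 + s * y) * (1 + u * y)) =
        1 + (s + u) * (x + y) + (s + u) ^ 2 * (x * y) +
        (s * u * (x * x) + s * u * (y * y) + s * u * (s + u) * (x * x * y) +
          s * u * (s + u) * (x * y * y) + (s * u) * (s * u) * (x * x) * (y * y)) := by ring
      rw [this]
      have : 0 ≤ (s * u * (x * x) + s * u * (y * y) + s * u * (s + u) * (x * x * y) +
          s * u * (s + u) * (x * y * y) + (s * u) * (s * u) * (x * x) * (y * y)) := by positivity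
      linarith
    have q1 : s * u * (x + y) ≤ (s + u) * (x + y) := by
      apply mul_le_mul_of_nonneg_right _ (by positivity)
      nlinarith
    have q2 : s * u * (x * y) ≤ (s + u) ^ 2 * (x * y) := by
      apply mul_le_mul_of_nonneg_right _ (by positivity)
      nlinarith
    have q3 : 0 ≤ s * u * (x + y) := by positivity
    have q4 : 0 ≤ s * u * (x * y) := by positivity
    rw [abs_le]
    constructor <;> linarith

lemma c_hh {s u : ℝ} (hs : s ∈ Set.Icc (0 : ℝ) 1) (hu : u ∈ Set.Icc (0 : ℝ) 1) :
    1 / 2 ≤ c (hh s u) := by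
  have e : ∫ x in (0 : ℝ)..1, 1 / (1 + x) ^ 2 = 1 / 2 := by
    have := intervalIntegral.integral_eq_sub_of_hasDerivAt (a := 0) (b := 1)
      (f := fun x : ℝ => -(1 + x)⁻¹) (f' := fun x => 1 / (1 + x) ^ 2) ?_ ?_
    · rw [this]; norm_num
    · intro x hx
      rw [Set.uIcc_of_le zero_le_one] at hx
      have h1 : HasDerivAt (fun y : ℝ => 1 + y) 1 x := (hasDerivAt_id x).const_add _
      have h0 : 1 + x ≠ 0 := by have := hx.1; positivity
      refine (h1.fun_inv h0).fun_neg.congr_deriv ?_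
      ring
    · apply ContinuousOn.intervalIntegrable
      rw [Set.uIcc_of_le zero_le_one]
      apply ContinuousOn.div (by fun_prop) (by fun_prop)
      intro y hy
      have := hy.1
      positivity
  rw [← e]
  unfold c
  apply intervalIntegral.integral_mono_on zero_le_one
  · apply ContinuousOn.intervalIntegrable
    rw [Set.uIcc_of_le zero_le_one]
    apply ContinuousOn.div (by fun_prop) (by fun_prop)
    intro y hy
    have := hy.1
    positivity
  · exact (adm_hh hs hu).intervalIntegrable
  · rintro x ⟨hx0, hx1⟩
    obtain ⟨hs0, hs1⟩ := hs
    obtain ⟨hu0, hu1⟩ := hu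
    have : hh s u x / (1 + x) = 1 / ((1 + s * x) * (1 + u * x)) := by
      unfold hh
      field_simp
    rw [this, sq]
    apply one_div_le_one_div_of_le (by positivity)
    apply mul_le_mul _ _ (by positivity) (by positivity)
    · nlinarith
    · nlinarith

lemma J_branch {s u : ℝ} (hs : s ∈ Set.Icc (0 : ℝ) 1) (hu : u ∈ Set.Icc (0 : ℝ) 1) (E : Set ℝ) :
    J (hh s u) E = ∑' i : ℕ, ENNReal.ofReal (v i s * v i u) * J (hh (v i s) (v i u)) (v i ⁻¹' E) := by
  unfold J
  rw [cov]
  congr 1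
  ext i
  rw [← lintegral_const_mul' _ _ ENNReal.ofReal_ne_top]
  refine setLIntegral_congr_fun measurableSet_Ioo fun y hy => ?_
  have hy0 := hy.1
  have hs0 := hs.1
  have hu0 := hu.1
  simp only [Set.indicator, Set.mem_preimage]
  split_ifs
  · rw [← ENNReal.ofReal_mul (by positivity), ← ENNReal.ofReal_mul
      (mul_pos (v_pos i hs0) (v_pos i hu0)).le]
    congr 1
    unfold hh v
    field_simp
    ring
  · simp

/-- `A` depends (within `(0,1)`) only on the first `k` partial quotients -/
def Dep (k : ℕ) (A : Set ℝ) : Prop :=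
  ∀ x ∈ Set.Ioo (0 : ℝ) 1, ∀ y ∈ Set.Ioo (0 : ℝ) 1, (∀ i < k, cfa i x = cfa i y) →
    (x ∈ A ↔ y ∈ A)

lemma Dep.branch {k : ℕ} {A : Set ℝ} (h : Dep (k + 1) A) (i : ℕ) : Dep k (v i ⁻¹' A) := by
  intro x hx y hy hxy
  refine h _ (v_mem' i hx.1) _ (v_mem' i hy.1) ?_
  intro j hj
  cases j with
  | zero => rw [cfa_zero_v i hx, cfa_zero_v i hy]
  | succ j =>
    simp only [cfa, gaussMap_v i hx, gaussMap_v i hy]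
    exact hxy j (by omega)

lemma main (n k : ℕ) (B : Set ℝ) (hB : MeasurableSet B) : ∀ (A : Set ℝ), Dep k A →
    ∀ s ∈ Set.Icc (0 : ℝ) 1, ∀ u ∈ Set.Icc (0 : ℝ) 1,
    J (hh s u) (A ∩ gaussMap^[n + k] ⁻¹' B) ≤
      ENNReal.ofReal (1 + (7 / 8) ^ n) * gaussMeasure B * J (hh s u) A ∧
    ENNReal.ofReal (1 - (7 / 8) ^ n) * gaussMeasure B * J (hh s u) A ≤
      J (hh s u) (A ∩ gaussMap^[n + k] ⁻¹' B) := by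
  have hq : (7 / 8 : ℝ) ^ n ≤ 1 := pow_le_one₀ (by norm_num) (by norm_num)
  have hq0 : 0 ≤ (7 / 8 : ℝ) ^ n := by positivity
  induction k with
  | zero =>
    intro A hA s hs u hu
    by_cases hne : ∃ x ∈ Set.Ioo (0 : ℝ) 1, x ∈ A
    · obtain ⟨x, hx, hxA⟩ := hne
      have hall : ∀ y ∈ Set.Ioo (0 : ℝ) 1, y ∈ A := fun y hy =>
        (hA x hx y hy (by simp)).1 hxA
      rw [J_congr_set (F := Set.univ) (E := A) _ (by simpa using hall),
        J_congr_set (F := gaussMap^[n] ⁻¹' B) (E := A ∩ _) _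
          (fun y hy => by simp [hall y hy]), J_univ (adm_hh hs hu)]
      have h1 := decay n _ _ (adm_hh hs hu) B hB
      have h2 := c_hh hs hu
      rw [mul_right_comm, ← ENNReal.ofReal_mul (by positivity), mul_right_comm,
        ← ENNReal.ofReal_mul (by linarith)]
      refine ⟨h1.1.trans ?_, le_trans ?_ h1.2⟩
      · gcongr
        nlinarith
      · gcongr
        nlinarith
    · push Not at hne
      rw [J_congr_set (F := ∅) (E := A) _ (by simpa using hne),
        J_congr_set (F := ∅) (E := A ∩ _) _ (fun y hy => by simp [hne y hy])]
      simp [J]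
  | succ k ih =>
    intro A hA s hs u hu
    rw [J_branch hs hu, J_branch hs hu A, ← ENNReal.tsum_mul_left, ← ENNReal.tsum_mul_left]
    have key : ∀ i, J (hh (v i s) (v i u)) (v i ⁻¹' (A ∩ gaussMap^[n + (k + 1)] ⁻¹' B)) =
        J (hh (v i s) (v i u)) (v i ⁻¹' A ∩ gaussMap^[n + k] ⁻¹' B) := by
      intro i
      refine J_congr_set _ fun y hy => ?_
      simp only [Set.mem_preimage, Set.mem_inter_iff]
      rw [← add_assoc, Function.iterate_succ_apply, gaussMap_v i hy]
    simp_rw [key]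
    have h := fun i => ih (v i ⁻¹' A) (hA.branch i) _ (v_mem i hs.1) _ (v_mem i hu.1)
    constructor
    · refine ENNReal.tsum_le_tsum fun i => ?_
      rw [mul_left_comm]
      exact mul_le_mul_right (h i).1 _
    · refine ENNReal.tsum_le_tsum fun i => ?_
      rw [mul_left_comm]
      exact mul_le_mul_right (h i).2 _

lemma upTo_meas {k : ℕ} {A : Set ℝ} (hA : MeasurableSet[cfSigmaUpTo k] A) : MeasurableSet A := by
  have : cfSigmaUpTo k ≤ borel ℝ := by
    unfold cfSigmaUpTo
    refine iSup₂_le fun i _ => ?_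
    rw [← BorelSpace.measurable_eq (α := ℝ)]
    exact (measurable_cfa i).comap_le
  rw [BorelSpace.measurable_eq (α := ℝ)]
  exact this A hA

/-- the σ-algebra of sets depending on the first `k` partial quotients -/
def depSigma (k : ℕ) : MeasurableSpace ℝ where
  MeasurableSet' := Dep k
  measurableSet_empty := fun _ _ _ _ _ => Iff.rfl
  measurableSet_compl := fun _ h x hx y hy hxy => not_congr (h x hx y hy hxy)
  measurableSet_iUnion := fun f h x hx y hy hxy => by
    simp only [Set.mem_iUnion]
    exact exists_congr fun i => h i x hx y hy hxy

lemma upTo_dep {k : ℕ} {A : Set ℝ} (hA : MeasurableSet[cfSigmaUpTo k] A) : Dep k A := by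
  have : cfSigmaUpTo k ≤ depSigma k := by
    unfold cfSigmaUpTo
    refine iSup₂_le fun i hi => ?_
    rintro _ ⟨S, _, rfl⟩ x hx y hy hxy
    simp only [Set.mem_preimage]
    rw [hxy i (Finset.mem_range.1 hi)]
  exact this A hA

lemma from_meas {j : ℕ} {B : Set ℝ} (hB : MeasurableSet[cfSigmaFrom j] B) :
    ∃ B' : Set ℝ, MeasurableSet B' ∧ gaussMap^[j] ⁻¹' B' = B := by
  have : cfSigmaFrom j ≤ MeasurableSpace.comap (gaussMap^[j]) inferInstance := by
    unfold cfSigmaFrom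
    refine iSup₂_le fun i hi => ?_
    rintro _ ⟨S, _, rfl⟩
    obtain ⟨m, rfl⟩ := Nat.exists_eq_add_of_le' (show j ≤ i from hi)
    refine ⟨cfa m ⁻¹' S, measurable_cfa m (MeasurableSet.of_discrete), ?_⟩
    ext x
    simp [cfa_add]
  exact this B hB

end PM

/-- **Philipp's ψ-mixing estimate**: there exists `θ ∈ (0,1)` such that
`|μ(A ∩ B) − μ(A)μ(B)| ≤ θ^n μ(A)μ(B)` for all `k, n ≥ 1`, all `A ∈ σ(a_1, …, a_k)` and all
`B ∈ σ(a_{k+n+1}, …)`, where `μ` is the Gauss measure. -/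
theorem philipp_mixing :
    ∃ θ : ℝ, θ ∈ Set.Ioo (0 : ℝ) 1 ∧
      ∀ k n : ℕ, 1 ≤ k → 1 ≤ n → ∀ A B : Set ℝ,
        MeasurableSet[cfSigmaUpTo k] A → MeasurableSet[cfSigmaFrom (k + n)] B →
        |(gaussMeasure (A ∩ B)).toReal - (gaussMeasure A).toReal * (gaussMeasure B).toReal| ≤
          θ ^ n * (gaussMeasure A).toReal * (gaussMeasure B).toReal := by
  refine ⟨7 / 8, by norm_num, ?_⟩
  intro k n _ _ A B hA hB
  obtain ⟨B', hB', rfl⟩ := PM.from_meas hB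
  have hAm := PM.upTo_meas hA
  have hl := PM.log2_pos
  have hq : (7 / 8 : ℝ) ^ n ≤ 1 := pow_le_one₀ (by norm_num) (by norm_num)
  have hq0 : 0 ≤ (7 / 8 : ℝ) ^ n := by positivity
  have hE : ∀ E : Set ℝ, MeasurableSet E →
      PM.J (PM.hh 0 1) E = ENNReal.ofReal (Real.log 2) * gaussMeasure E := by
    intro E hE
    rw [← one_mul (Real.log 2), ← PM.J_const 1 zero_le_one hE]
    refine PM.J_congr (fun x hx => ?_) E
    have := hx.1
    unfold PM.hh
    field_simp
    simp
  have fin : ∀ E : Set ℝ, MeasurableSet E → gaussMeasure E ≠ ⊤ := by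
    intro E hE
    have h1 : gaussMeasure Set.univ ≠ ⊤ := by
      rw [PM.gauss_eq MeasurableSet.univ, PM.J_univ (PM.adm_const (inv_nonneg.2 hl.le))]
      exact ENNReal.ofReal_ne_top
    exact ne_top_of_le_ne_top h1 (measure_mono (Set.subset_univ _))
  have hBm : MeasurableSet (gaussMap^[k + n] ⁻¹' B') := PM.measurable_iter _ hB'
  have h := PM.main n k B' hB' A (PM.upTo_dep hA) 0 (by simp) 1 (by simp)
  rw [add_comm n k, hE _ (hAm.inter hBm), hE _ hAm, ← PM.gauss_inv hB' (k + n)] at h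
  have fA := fin _ hAm
  have fB := fin _ hBm
  have fAB := fin _ (hAm.inter hBm)
  have h1 := ENNReal.toReal_mono (by finiteness) h.1
  have h2 := ENNReal.toReal_mono (by finiteness) h.2
  simp only [ENNReal.toReal_mul] at h1 h2
  rw [ENNReal.toReal_ofReal hl.le, ENNReal.toReal_ofReal (by linarith)] at h1 h2
  set a := (gaussMeasure A).toReal
  set b := (gaussMeasure (gaussMap^[k + n] ⁻¹' B')).toReal
  set e := (gaussMeasure (A ∩ gaussMap^[k + n] ⁻¹' B')).toReal
  have h1' : e ≤ (1 + (7 / 8) ^ n) * b * a := by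
    apply le_of_mul_le_mul_left _ hl
    linarith
  have h2' : (1 - (7 / 8) ^ n) * b * a ≤ e := by
    apply le_of_mul_le_mul_left _ hl
    linarith
  rw [abs_le]
  constructor <;> linarith
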